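/- arXiv:2304.09965 — 4 statements merged into one kernel-verified Lean document; each statement's English description precedes it below -/
import Mathlib

section
/- For every integer m with m ≥ 0, every integer n with 0 < n < L, and every real I with 0 ≤ I < 1, the probability P_L(m,n) that the random walk started at (m,n) hits the line L₁ = {m' = −1} strictly before hitting the line L₂ = {n' = L} equals the finite sum Σ_{i=0}^{L−n−1} a_{i,m} (1−I)^i I^{m+1+i}, where a_{i,m} is the number of first-passage paths defined below. -/
/-!
The walk reaches `-1` for the first time by a step `-1`, which leaves the second coordinate
unchanged. Hence avoiding the line `n' = L` strictly before the hitting time `T` amounts to the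
single condition that the total number `i` of up-steps be less than `L - n`
(`hit_iff`; the number of up-steps is nondecreasing and grows by at most one at a time).
Since the walk travels from `m` to `-1`, such a path has length `T = m + 2 i + 1` and weight
`(1 - I) ^ i * I ^ (m + 1 + i)`, so a length `T` contributes only if `T = m + 2 i + 1` with
`i < L - n`, and then it contributes `a i m` times this weight. The series defining `P` is
therefore a finite sum.
-/

-- `P I L m n` : the probability that the 2D random walk started at `(m, n)`, with i.i.d.
-- steps `(-1, 0)` (probability `I`) and `(1, 1)` (probability `1 - I`), hits the line
-- `L₁ = {(m', n') : m' = -1}` strictly before hitting the line `L₂ = {(m', n') : n' = L}`,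
-- written as `∑_{T=0}^∞ Pr(s_T ∈ L₁ ∧ ∀ T' < T, s_{T'} ∉ L₁ ∪ L₂)`.
-- A step sequence of length `T` is encoded as `d : Fin T → Bool`, where `d t = true` means
-- the step `(1, 1)` (probability `1 - I`) and `d t = false` means `(-1, 0)` (probability `I`).
open Classical in
noncomputable def P (I : ℝ) (L m n : ℤ) : ℝ :=
  ∑' T : ℕ, ∑ d : Fin T → Bool,
    if (m + ∑ t : Fin T, (if d t then (1 : ℤ) else -1)) = -1 ∧
        (∀ k : ℕ, k < T →
          (m + ∑ t ∈ Finset.univ.filter (fun t : Fin T => (t : ℕ) < k),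
              (if d t then (1 : ℤ) else -1)) ≠ -1 ∧
          (n + ∑ t ∈ Finset.univ.filter (fun t : Fin T => (t : ℕ) < k),
              (if d t then (1 : ℤ) else 0)) ≠ L) then
      ∏ t : Fin T, (if d t then (1 - I) else I)
    else 0

-- `a i m` : the number of sequences `(d_1, …, d_{m+2i+1})` with entries in `{-1, +1}`
-- (encoded by `Bool`, `true ↦ +1`, `false ↦ -1`), having exactly `i` entries equal to `+1`
-- (hence `m + i + 1` entries equal to `-1`), such that the partial sums satisfy
-- `m + d_1 + ⋯ + d_k ≥ 0` for all `k = 1, …, m + 2i`; i.e. the walk on `ℤ` started at `m`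
-- first reaches `-1` exactly at step `m + 2i + 1`.
noncomputable def a (i m : ℕ) : ℕ :=
  Nat.card {d : Fin (m + 2 * i + 1) → Bool //
    (Finset.univ.filter (fun t => d t = true)).card = i ∧
    ∀ k : ℕ, k ≤ m + 2 * i →
      0 ≤ (m : ℤ) + ∑ t ∈ Finset.univ.filter (fun t : Fin (m + 2 * i + 1) => (t : ℕ) < k),
            (if d t then (1 : ℤ) else -1) }

/-- Displacement of the first coordinate during the first `k` steps of `d`. -/
def disp {T : ℕ} (d : Fin T → Bool) (k : ℕ) : ℤ :=
  ∑ t ∈ Finset.univ.filter (fun t : Fin T => (t : ℕ) < k), (if d t then (1 : ℤ) else -1)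

/-- Number of up-steps among the first `k` steps of `d`. -/
def ups {T : ℕ} (d : Fin T → Bool) (k : ℕ) : ℤ :=
  ∑ t ∈ Finset.univ.filter (fun t : Fin T => (t : ℕ) < k), (if d t then (1 : ℤ) else 0)

lemma sum_filter_lt_succ {T : ℕ} (f : Fin T → ℤ) (k : ℕ) (hk : k < T) :
    ∑ t ∈ Finset.univ.filter (fun t : Fin T => (t : ℕ) < k + 1), f t =
      ∑ t ∈ Finset.univ.filter (fun t : Fin T => (t : ℕ) < k), f t + f ⟨k, hk⟩ := by
  have h : Finset.univ.filter (fun t : Fin T => (t : ℕ) < k + 1) =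
      insert ⟨k, hk⟩ (Finset.univ.filter (fun t : Fin T => (t : ℕ) < k)) := by
    ext t
    simp only [Finset.mem_filter, Finset.mem_univ, true_and, Finset.mem_insert, Fin.ext_iff]
    omega
  rw [h, Finset.sum_insert (by simp), add_comm]

lemma filter_lt_self (T : ℕ) :
    Finset.univ.filter (fun t : Fin T => (t : ℕ) < T) = Finset.univ := by
  ext t
  simp

lemma disp_zero {T : ℕ} (d : Fin T → Bool) : disp d 0 = 0 := by simp [disp]

lemma ups_zero {T : ℕ} (d : Fin T → Bool) : ups d 0 = 0 := by simp [ups]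

lemma step {T : ℕ} (d : Fin T → Bool) (k : ℕ) (hk : k < T) :
    (disp d (k + 1) = disp d k + 1 ∧ ups d (k + 1) = ups d k + 1) ∨
      (disp d (k + 1) = disp d k - 1 ∧ ups d (k + 1) = ups d k) := by
  unfold disp ups
  rw [sum_filter_lt_succ _ k hk, sum_filter_lt_succ _ k hk]
  cases d ⟨k, hk⟩ <;> simp [sub_eq_add_neg]

lemma disp_eq {T : ℕ} (d : Fin T → Bool) (k : ℕ) (hk : k ≤ T) :
    disp d k = 2 * ups d k - k := by
  induction k with
  | zero => simp [disp_zero, ups_zero]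
  | succ k ih =>
    have := ih (by omega)
    push_cast
    rcases step d k (by omega) with h | h <;> omega

lemma ups_mono {T : ℕ} (d : Fin T → Bool) {j k : ℕ} (h : j ≤ k) : ups d j ≤ ups d k := by
  refine Finset.sum_le_sum_of_subset_of_nonneg ?_ fun t _ _ => by split <;> simp
  intro t
  simp only [Finset.mem_filter, Finset.mem_univ, true_and]
  omega

lemma ups_self {T : ℕ} (d : Fin T → Bool) :
    ups d T = ((Finset.univ.filter (fun t => d t = true)).card : ℤ) := by
  simp [ups]

/-- A path from `(m, n)` hits `L₁` at time `T`, and neither line earlier, iff it has the right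
length, its first coordinate stays nonnegative before time `T`, and it has fewer than `L - n`
up-steps in total. -/
lemma hit_iff {T : ℕ} (d : Fin T → Bool) (m : ℕ) (n L : ℤ) (hnL : n < L) :
    ((m : ℤ) + disp d T = -1 ∧ ∀ k < T, (m : ℤ) + disp d k ≠ -1 ∧ n + ups d k ≠ L) ↔
      (T : ℤ) = m + 2 * ups d T + 1 ∧ (∀ k < T, 0 ≤ (m : ℤ) + disp d k) ∧
        ups d T < L - n := by
  have hT := disp_eq d T le_rfl
  constructor
  · rintro ⟨h1, h2⟩
    have key : ∀ k < T, 0 ≤ (m : ℤ) + disp d k ∧ n + ups d k < L := by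
      intro k
      induction k with
      | zero =>
        intro _
        rw [disp_zero, ups_zero]
        omega
      | succ k ih =>
        intro hk
        have := ih (by omega)
        have := h2 (k + 1) hk
        rcases step d k (by omega) with h | h <;> omega
    refine ⟨by omega, fun k hk => (key k hk).1, ?_⟩
    -- The last step goes down, so it does not change the number of up-steps.
    cases T with
    | zero =>
      rw [disp_zero] at h1
      omega
    | succ T =>
      have := key T (by omega)
      rcases step d T (by omega) with h | h <;> omega
  · rintro ⟨h1, h2, h3⟩
    refine ⟨by omega, fun k hk => ?_⟩
    have := h2 k hk
    have := ups_mono d hk.le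
    omega

lemma weight_eq {T : ℕ} (d : Fin T → Bool) (I : ℝ) (m i : ℕ) (hT : T = m + 2 * i + 1)
    (hi : (Finset.univ.filter (fun t => d t = true)).card = i) :
    ∏ t : Fin T, (if d t then (1 - I) else I) = (1 - I) ^ i * I ^ (m + 1 + i) := by
  have h := Finset.card_filter_add_card_filter_not
    (s := (Finset.univ : Finset (Fin T))) (fun t => d t = true)
  rw [Finset.card_univ, Fintype.card_fin] at h
  rw [Finset.prod_ite, Finset.prod_const, Finset.prod_const, hi]
  congr 2
  omega

open Classical in
/-- The probability that the walk hits `L₁` at time `T`, having met neither line before. -/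
noncomputable def hitAt (I : ℝ) (L m n : ℤ) (T : ℕ) : ℝ :=
  ∑ d : Fin T → Bool,
    if m + disp d T = -1 ∧ ∀ k < T, m + disp d k ≠ -1 ∧ n + ups d k ≠ L then
      ∏ t : Fin T, (if d t then (1 - I) else I)
    else 0

lemma P_eq (I : ℝ) (L m n : ℤ) : P I L m n = ∑' T, hitAt I L m n T := by
  unfold P hitAt disp ups
  simp only [filter_lt_self]

lemma hitAt_eq_zero (I : ℝ) (L : ℤ) (m : ℕ) (n : ℤ) (hnL : n < L) (T : ℕ)
    (hT : ∀ i < (L - n).toNat, m + 2 * i + 1 ≠ T) : hitAt I L m n T = 0 := by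
  classical
  refine Finset.sum_eq_zero fun d _ => if_neg fun h => ?_
  rw [hit_iff d m n L hnL, ups_self] at h
  obtain ⟨h1, -, h3⟩ := h
  exact hT (Finset.univ.filter (fun t => d t = true)).card (by omega) (by omega)

lemma hitAt_eq (I : ℝ) (L : ℤ) (m : ℕ) (n : ℤ) (hnL : n < L) (i : ℕ)
    (hi : i < (L - n).toNat) :
    hitAt I L m n (m + 2 * i + 1) = (a i m : ℝ) * (1 - I) ^ i * I ^ (m + 1 + i) := by
  classical
  have hiff : ∀ d : Fin (m + 2 * i + 1) → Bool,
      ((m : ℤ) + disp d (m + 2 * i + 1) = -1 ∧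
        ∀ k < m + 2 * i + 1, (m : ℤ) + disp d k ≠ -1 ∧ n + ups d k ≠ L) ↔
      ((Finset.univ.filter (fun t => d t = true)).card = i ∧
        ∀ k : ℕ, k ≤ m + 2 * i → 0 ≤ (m : ℤ) + disp d k) := by
    intro d
    rw [hit_iff d m n L hnL, ups_self]
    simp only [Nat.lt_succ_iff]
    constructor
    · rintro ⟨h1, h2, -⟩
      exact ⟨by push_cast at h1; omega, h2⟩
    · rintro ⟨h1, h2⟩
      exact ⟨by push_cast; omega, h2, by omega⟩
  have ha : a i m = (Finset.univ.filter (fun d : Fin (m + 2 * i + 1) → Bool =>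
      (Finset.univ.filter (fun t => d t = true)).card = i ∧
        ∀ k : ℕ, k ≤ m + 2 * i → 0 ≤ (m : ℤ) + disp d k)).card := by
    unfold a disp
    rw [Nat.card_eq_fintype_card, Fintype.card_subtype]
  unfold hitAt
  simp only [hiff]
  rw [← Finset.sum_filter, ha, mul_assoc, ← nsmul_eq_mul]
  refine Finset.sum_eq_card_nsmul fun d hd => ?_
  exact weight_eq d I m i rfl (Finset.mem_filter.mp hd).2.1

-- STATEMENT 0: for every integer `m ≥ 0`, every integer `n` with `0 < n < L`, and every
-- real `I` with `0 ≤ I < 1`, the hitting probability `P_L(m, n)` equals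
-- `Σ_{i=0}^{L-n-1} a_{i,m} (1-I)^i I^(m+1+i)`.
theorem stmt0 (L : ℤ) (hL : 0 < L) (m : ℕ) (n : ℤ) (hn : 0 < n) (hnL : n < L)
    (I : ℝ) (hI0 : 0 ≤ I) (hI1 : I < 1) :
    P I L (m : ℤ) n =
      ∑ i ∈ Finset.range (L - n).toNat,
        (a i m : ℝ) * (1 - I) ^ i * I ^ (m + 1 + i) := by
  rw [P_eq, tsum_eq_sum (s := (Finset.range (L - n).toNat).image fun i => m + 2 * i + 1),
    Finset.sum_image (by intro x _ y _ h; simp only at h; omega)]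
  · exact Finset.sum_congr rfl fun i hi =>
      hitAt_eq I L m n hnL i (Finset.mem_range.mp hi)
  · intro T hT
    refine hitAt_eq_zero I L m n hnL T fun i hi h => hT ?_
    exact Finset.mem_image.mpr ⟨i, Finset.mem_range.mpr hi, h⟩
end

section
/- (Theorem 1, explicit coefficients) For all integers i > 1 and m > 1, the first-passage path count a_{i,m} equals C_{i+1} + Σ_{j₁=3}^{m+1} C_i + Σ_{j₁=3}^{m+1} Σ_{j₂=3}^{j₁+1} C_{i−1} + ⋯ + Σ_{j₁=3}^{m+1} Σ_{j₂=3}^{j₁+1} ⋯ Σ_{j_{i−2}=3}^{j_{i−3}+1} C_3 + Σ_{j₁=3}^{m+1} Σ_{j₂=3}^{j₁+1} ⋯ Σ_{j_{i−1}=3}^{j_{i−2}+1} (1 + j_{i−1}), where C_i is the i-th Catalan number. -/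
-- `nested k f m` is the `k`-fold nested sum
-- `Σ_{j₁=3}^{m+1} Σ_{j₂=3}^{j₁+1} ⋯ Σ_{j_k=3}^{j_{k-1}+1} f (j_k)` (with `nested 0 f m = f m`).
def nested : ℕ → (ℕ → ℕ) → ℕ → ℕ
  | 0, f, m => f m
  | k + 1, f, m => ∑ j ∈ Finset.Icc 3 (m + 1), nested k f j

/-- `d` encodes a walk of length `n` on `ℤ` started at `m` with `i` up-steps, which is nonnegative
at every time strictly before `n`. The start `m` is an integer so that `m = -1`, the absorbing
position, is allowed: it is reached by the first-step decomposition. -/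
def IsWalk (n i : ℕ) (m : ℤ) (d : Fin n → Bool) : Prop :=
  (Finset.univ.filter (fun t => d t = true)).card = i ∧
    ∀ k : ℕ, k < n →
      0 ≤ m + ∑ t ∈ Finset.univ.filter (fun t : Fin n => (t : ℕ) < k),
            (if d t then (1 : ℤ) else -1)

open Classical in
/-- The number of walks in the sense of `IsWalk`. -/
noncomputable def walkCount (n i : ℕ) (m : ℤ) : ℕ :=
  ∑ d : Fin n → Bool, if IsWalk n i m d then 1 else 0

lemma a_eq_walkCount (i m : ℕ) : a i m = walkCount (m + 2 * i + 1) i m := by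
  classical
  unfold a walkCount
  rw [← Finset.card_filter, Nat.card_eq_fintype_card, Fintype.card_subtype]
  congr 1
  ext d
  simp only [Finset.mem_filter, IsWalk, Nat.lt_succ_iff]

lemma isWalk_cons (n i : ℕ) (m : ℤ) (x : Bool) (d : Fin n → Bool) :
    IsWalk (n + 1) i m (Fin.cons x d) ↔
      0 ≤ m ∧ (Finset.univ.filter (fun t => d t = true)).card + (if x then 1 else 0) = i ∧
      ∀ k : ℕ, k < n →
        0 ≤ (m + (if x then 1 else -1)) + ∑ t ∈ Finset.univ.filter (fun t : Fin n => (t : ℕ) < k),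
            (if d t then (1 : ℤ) else -1) := by
  have hc : (Finset.univ.filter
      (fun t => (Fin.cons x d : Fin (n + 1) → Bool) t = true)).card
      = (Finset.univ.filter (fun t => d t = true)).card + (if x then 1 else 0) := by
    rw [Finset.card_filter, Finset.card_filter, Fin.sum_univ_succ]
    simp [add_comm]
  have hs : ∀ k : ℕ, ∑ t ∈ Finset.univ.filter (fun t : Fin (n + 1) => (t : ℕ) < k + 1),
        (if (Fin.cons x d : Fin (n + 1) → Bool) t then (1 : ℤ) else -1)
      = (if x then 1 else -1) + ∑ t ∈ Finset.univ.filter (fun t : Fin n => (t : ℕ) < k),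
            (if d t then (1 : ℤ) else -1) := by
    intro k
    rw [Finset.sum_filter, Finset.sum_filter, Fin.sum_univ_succ]
    simp
  unfold IsWalk
  rw [hc]
  constructor
  · rintro ⟨h1, h2⟩
    refine ⟨by simpa using h2 0 (by omega), h1, fun k hk => ?_⟩
    have := h2 (k + 1) (by omega)
    rw [hs] at this
    linarith
  · rintro ⟨h0, h1, h2⟩
    refine ⟨h1, fun k hk => ?_⟩
    rcases k with _ | k
    · simpa using h0
    · have := h2 k (by omega)
      rw [hs]
      linarith

lemma isWalk_cons_true (n i : ℕ) (m : ℤ) (hm : 0 ≤ m) (d : Fin n → Bool) :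
    IsWalk (n + 1) (i + 1) m (Fin.cons true d) ↔ IsWalk n i (m + 1) d := by
  rw [isWalk_cons]
  simp [hm, IsWalk]

lemma isWalk_cons_false (n i : ℕ) (m : ℤ) (hm : 0 ≤ m) (d : Fin n → Bool) :
    IsWalk (n + 1) i m (Fin.cons false d) ↔ IsWalk n i (m - 1) d := by
  rw [isWalk_cons]
  simp [hm, IsWalk, sub_eq_add_neg]

lemma not_isWalk_cons_true_zero (n : ℕ) (m : ℤ) (d : Fin n → Bool) :
    ¬ IsWalk (n + 1) 0 m (Fin.cons true d) := by
  rw [isWalk_cons]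
  simp

open Classical in
lemma walkCount_succ_eq_sum (n i : ℕ) (m : ℤ) :
    walkCount (n + 1) i m =
      (∑ d : Fin n → Bool, if IsWalk (n + 1) i m (Fin.cons true d) then 1 else 0)
      + ∑ d : Fin n → Bool, if IsWalk (n + 1) i m (Fin.cons false d) then 1 else 0 := by
  unfold walkCount
  rw [← (Fin.consEquiv (fun _ : Fin (n + 1) => Bool)).sum_comp, Fintype.sum_prod_type,
    Fintype.sum_bool]
  rfl

lemma walkCount_succ_succ (n i : ℕ) (m : ℤ) (hm : 0 ≤ m) :
    walkCount (n + 1) (i + 1) m = walkCount n i (m + 1) + walkCount n (i + 1) (m - 1) := by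
  classical
  rw [walkCount_succ_eq_sum]
  simp only [isWalk_cons_true n i m hm, isWalk_cons_false n _ m hm, walkCount]

lemma walkCount_succ_zero (n : ℕ) (m : ℤ) (hm : 0 ≤ m) :
    walkCount (n + 1) 0 m = walkCount n 0 (m - 1) := by
  classical
  rw [walkCount_succ_eq_sum]
  simp only [not_isWalk_cons_true_zero, isWalk_cons_false n _ m hm, walkCount, if_false,
    Finset.sum_const_zero, zero_add]

lemma walkCount_succ_of_neg (n i : ℕ) (m : ℤ) (hm : m < 0) : walkCount (n + 1) i m = 0 := by
  classical
  rw [walkCount_succ_eq_sum]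
  simp [isWalk_cons, not_le.mpr hm]

lemma walkCount_zero_zero (m : ℤ) : walkCount 0 0 m = 1 := by
  simp [walkCount, IsWalk]

/-- The ballot numbers, given by the first-step recurrence of the first-passage counts. -/
def ballot : ℕ → ℕ → ℕ
  | 0, _ => 1
  | i + 1, 0 => ballot i 1
  | i + 1, m + 1 => ballot i (m + 2) + ballot (i + 1) m

lemma walkCount_eq_ballot (i m n : ℕ) (hn : n = m + 2 * i + 1) :
    walkCount n i m = ballot i m := by
  induction n generalizing i m with
  | zero => omega
  | succ n ih =>
    rcases i with _ | i
    · rw [walkCount_succ_zero n m (by positivity)]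
      rcases m with _ | m
      · obtain rfl : n = 0 := by omega
        simp [walkCount_zero_zero, ballot]
      · have := ih 0 m (by omega)
        simpa [ballot] using this
    · rw [walkCount_succ_succ n i m (by positivity)]
      rcases m with _ | m
      · have h1 := ih i 1 (by omega)
        -- After a down-step from `0` the walk sits at `-1` with steps still to make.
        obtain ⟨n, rfl⟩ : ∃ n', n = n' + 1 := ⟨n - 1, by omega⟩
        rw [walkCount_succ_of_neg n (i + 1) _ (by simp)]
        simpa [ballot] using h1
      · have h1 := ih i (m + 2) (by omega)
        have h2 := ih (i + 1) m (by omega)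
        rw [ballot, ← h1, ← h2]
        push_cast
        ring_nf

lemma a_eq_ballot (i m : ℕ) : a i m = ballot i m := by
  rw [a_eq_walkCount, walkCount_eq_ballot i m _ rfl]

/-- The reflection formula, written without subtraction. -/
lemma ballot_add_choose (i m : ℕ) :
    ballot (i + 1) m + (m + 2 * i + 2).choose i = (m + 2 * i + 2).choose (i + 1) := by
  induction i generalizing m with
  | zero =>
    induction m with
    | zero => simp [ballot]
    | succ m ih =>
      simp [ballot] at ih ⊢
      omega
  | succ i ihi =>
    induction m with
    | zero =>
      have h := ihi 1
      have hsymm : (2 * i + 3).choose (i + 2) = (2 * i + 3).choose (i + 1) :=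
        Nat.choose_symm_of_eq_add (by omega)
      have e : 0 + 2 * (i + 1) + 2 = (2 * i + 3) + 1 := by ring
      have e' : 1 + 2 * i + 2 = 2 * i + 3 := by ring
      rw [e'] at h
      rw [e, ballot, Nat.choose_succ_succ, Nat.choose_succ_succ _ (i + 1)]
      simp only [Nat.succ_eq_add_one, show i + 1 + 1 = i + 2 from rfl] at *
      omega
    | succ m ihm =>
      have h := ihi (m + 2)
      have e : m + 1 + 2 * (i + 1) + 2 = (m + 2 * i + 4) + 1 := by ring
      have e' : m + 2 + 2 * i + 2 = m + 2 * i + 4 := by ring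
      have e'' : m + 2 * (i + 1) + 2 = m + 2 * i + 4 := by ring
      rw [e'] at h
      rw [e''] at ihm
      rw [e, ballot, Nat.choose_succ_succ, Nat.choose_succ_succ _ (i + 1)]
      simp only [Nat.succ_eq_add_one, show i + 1 + 1 = i + 2 from rfl] at *
      omega

lemma ballot_one (i : ℕ) : ballot i 1 = catalan (i + 1) := by
  have h := ballot_add_choose i 0
  have h2 := Nat.choose_succ_right_eq (2 * i + 2) i
  have h3 := succ_mul_catalan_eq_centralBinom (i + 1)
  rw [Nat.centralBinom, show 2 * (i + 1) = 2 * i + 2 by ring] at h3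
  rw [ballot, show 0 + 2 * i + 2 = 2 * i + 2 by ring] at h
  rw [show 2 * i + 2 - i = i + 2 by omega] at h2
  have : (i + 2) * ballot i 1 = (i + 2) * catalan (i + 1) := by
    linarith [congrArg (fun x => (i + 2) * x) h]
  exact Nat.eq_of_mul_eq_mul_left (by omega) this

lemma ballot_one_left (m : ℕ) : ballot 1 m = 1 + m := by
  induction m with
  | zero => simp [ballot]
  | succ m ih => rw [ballot, ih, ballot]; ring

/-- The recurrence in `m`, telescoped down to `m = 1`. -/
lemma ballot_succ_eq_sum (i m : ℕ) (hm : 1 ≤ m) :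
    ballot (i + 1) m = catalan (i + 2) + ∑ j ∈ Finset.Icc 3 (m + 1), ballot i j := by
  induction m, hm using Nat.le_induction with
  | base => simp [ballot_one]
  | succ m hm ih =>
    rw [Finset.sum_Icc_succ_top (by omega), ballot, ih]
    ring

lemma ballot_eq_nested (i m : ℕ) (hm : 1 ≤ m) :
    ballot (i + 2) m =
      catalan (i + 3)
        + (∑ r ∈ Finset.Icc 1 i, nested r (fun _ => catalan (i + 3 - r)) m)
        + nested (i + 1) (fun j => 1 + j) m := by
  induction i generalizing m with
  | zero =>
    rw [ballot_succ_eq_sum _ _ hm]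
    simp [nested, ballot_one_left]
  | succ i ih =>
    rw [ballot_succ_eq_sum _ _ hm, Finset.sum_congr rfl
      (fun j hj => ih j (by have := (Finset.mem_Icc.mp hj).1; omega)),
      Finset.sum_add_distrib, Finset.sum_add_distrib, Finset.sum_comm,
      -- The constant `catalan (i + 3)` becomes the `r = 1` term, and the others shift by one.
      ← Finset.add_sum_Ioc_eq_sum_Icc (show 1 ≤ i + 1 by omega)]
    have hshift : ∑ r ∈ Finset.Ioc 1 (i + 1), nested r (fun _ => catalan (i + 1 + 3 - r)) m
        = ∑ r ∈ Finset.Icc 1 i, ∑ j ∈ Finset.Icc 3 (m + 1),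
            nested r (fun _ => catalan (i + 3 - r)) j := by
      symm
      refine Finset.sum_bij (fun r _ => r + 1) ?_ ?_ ?_ ?_
      · intro r hr; simp at hr ⊢; omega
      · intro r _ s _ h; omega
      · intro r hr
        simp only [Finset.mem_Ioc] at hr
        exact ⟨r - 1, by simp; omega, by omega⟩
      · intro r _
        rw [nested, show i + 1 + 3 - (r + 1) = i + 3 - r by omega]
    rw [hshift]
    simp only [nested, show i + 1 + 3 - 1 = i + 3 by omega]
    ring

-- STATEMENT 1 (Theorem 1, explicit coefficients): for integers `i > 1` and `m > 1`,
-- `a i m = C_{i+1} + Σ_{j₁=3}^{m+1} C_i + Σ_{j₁=3}^{m+1} Σ_{j₂=3}^{j₁+1} C_{i-1} + ⋯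
--   + Σ_{j₁=3}^{m+1} ⋯ Σ_{j_{i-2}=3}^{j_{i-3}+1} C_3
--   + Σ_{j₁=3}^{m+1} ⋯ Σ_{j_{i-1}=3}^{j_{i-2}+1} (1 + j_{i-1})`,
-- where `C_i = catalan i` is the `i`-th Catalan number.  The `r`-fold nested sum of the
-- constant `C_{i+1-r}` (for `r = 1, …, i-2`), together with the leading term `C_{i+1}`
-- (the `0`-fold term) and the final `(i-1)`-fold nested sum of `1 + j`.
theorem stmt1 (i m : ℕ) (hi : 1 < i) (hm : 1 < m) :
    a i m =
      catalan (i + 1)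
        + (∑ r ∈ Finset.Icc 1 (i - 2), nested r (fun _ => catalan (i + 1 - r)) m)
        + nested (i - 1) (fun j => 1 + j) m := by
  obtain ⟨i, rfl⟩ : ∃ i', i = i' + 2 := ⟨i - 2, by omega⟩
  rw [a_eq_ballot, ballot_eq_nested i m hm.le]
  rfl
end

section
/- (51% attack resistance of finitely-long blockchains) For every real I with 0 < I < 1, every integer m ≥ 0, and every integer n with 0 < n < L, the success probability satisfies P_L(m,n) < 1; moreover, if 0 ≤ I < 1/2 then P_L(m,n) ≤ (I/(1−I))^{m+1}. In particular, even when I > 1/2 the probability of a successful double-spending attack on a finitely-long blockchain is strictly less than one. -/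
/-- The step sequence `d` takes the walk from `(m, n)` to the line `m' = -1` at time `T`, and at
no earlier time is the walk on `m' = -1` or on `n' = L`. -/
def Hits (L : ℤ) (T : ℕ) (m n : ℤ) (d : Fin T → Bool) : Prop :=
  (m + ∑ t : Fin T, (if d t then (1 : ℤ) else -1)) = -1 ∧
    (∀ k : ℕ, k < T →
      (m + ∑ t ∈ Finset.univ.filter (fun t : Fin T => (t : ℕ) < k),
          (if d t then (1 : ℤ) else -1)) ≠ -1 ∧
      (n + ∑ t ∈ Finset.univ.filter (fun t : Fin T => (t : ℕ) < k),
          (if d t then (1 : ℤ) else 0)) ≠ L)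

open Classical in
/-- The probability that the walk from `(m, n)` first meets `m' = -1` at time `T`, without having
met `n' = L` before. -/
noncomputable def pathWeight (I : ℝ) (L : ℤ) (T : ℕ) (m n : ℤ) : ℝ :=
  ∑ d : Fin T → Bool, if Hits L T m n d then ∏ t : Fin T, (if d t then (1 - I) else I) else 0

open Classical in
lemma P_eq_tsum_pathWeight (I : ℝ) (L m n : ℤ) : P I L m n = ∑' T, pathWeight I L T m n :=
  tsum_congr fun _ => Finset.sum_congr rfl fun _ _ => if_congr Iff.rfl rfl rfl

lemma hits_cons (L : ℤ) (T : ℕ) (m n : ℤ) (b : Bool) (d : Fin T → Bool) :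
    Hits L (T + 1) m n (Fin.cons b d : Fin (T + 1) → Bool) ↔
      (m ≠ -1 ∧ n ≠ L) ∧
        Hits L T (m + if b then 1 else -1) (n + if b then 1 else 0) d := by
  unfold Hits
  simp only [Finset.sum_filter, Fin.sum_univ_succ, Fin.cons_zero, Fin.cons_succ, Fin.val_zero,
    Fin.val_succ, ← add_assoc]
  constructor
  · rintro ⟨h, hk⟩
    refine ⟨by simpa using hk 0 (Nat.succ_pos T), h, fun k hkT => ?_⟩
    simpa using hk (k + 1) (by omega)
  · rintro ⟨h0, h, hk⟩
    refine ⟨h, fun k hkT => ?_⟩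
    cases k with
    | zero => simpa using h0
    | succ k => simpa using hk k (by omega)

lemma pathWeight_zero (I : ℝ) (L m n : ℤ) :
    pathWeight I L 0 m n = if m = -1 then 1 else 0 := by
  simp [pathWeight, Hits]

open Classical in
/-- First-step decomposition at a point off both lines. -/
lemma pathWeight_succ (I : ℝ) (L : ℤ) (T : ℕ) (m n : ℤ) (hm : m ≠ -1) (hn : n ≠ L) :
    pathWeight I L (T + 1) m n =
      I * pathWeight I L T (m - 1) n + (1 - I) * pathWeight I L T (m + 1) (n + 1) := by
  unfold pathWeight
  rw [← (Fin.consEquiv (fun _ : Fin (T + 1) => Bool)).sum_comp, Fintype.sum_prod_type,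
    Fintype.sum_bool, add_comm, Finset.mul_sum, Finset.mul_sum]
  refine congrArg₂ (· + ·) (Finset.sum_congr rfl fun d _ => ?_) (Finset.sum_congr rfl fun d _ => ?_)
  · have h : Hits L (T + 1) m n (Fin.consEquiv (fun _ : Fin (T + 1) => Bool) (false, d)) ↔
        Hits L T (m - 1) n d := by
      have h := hits_cons L T m n false d
      simp only [Bool.false_eq_true, if_false, add_zero, ne_eq, hm, hn, not_false_eq_true, and_self, true_and] at h
      rw [sub_eq_add_neg]
      exact h
    rw [if_congr h rfl rfl, mul_ite, mul_zero]
    simp [Fin.consEquiv, Fin.prod_univ_succ]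
  · have h : Hits L (T + 1) m n (Fin.consEquiv (fun _ : Fin (T + 1) => Bool) (true, d)) ↔
        Hits L T (m + 1) (n + 1) d := by
      have h := hits_cons L T m n true d
      simp only [if_true, ne_eq, hm, hn, not_false_eq_true, and_self, true_and] at h
      exact h
    rw [if_congr h rfl rfl, mul_ite, mul_zero]
    simp [Fin.consEquiv, Fin.prod_univ_succ]

lemma pathWeight_succ_of_mem (I : ℝ) (L : ℤ) (T : ℕ) (m n : ℤ) (h : m = -1 ∨ n = L) :
    pathWeight I L (T + 1) m n = 0 := by
  unfold pathWeight
  rw [← (Fin.consEquiv (fun _ : Fin (T + 1) => Bool)).sum_comp]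
  refine Finset.sum_eq_zero fun x _ => if_neg fun hx => ?_
  have := ((hits_cons L T m n x.1 x.2).1 hx).1
  tauto

lemma pathWeight_nonneg {I : ℝ} (h0 : 0 ≤ I) (h1 : I ≤ 1) (L : ℤ) (T : ℕ) (m n : ℤ) :
    0 ≤ pathWeight I L T m n := by
  unfold pathWeight
  refine Finset.sum_nonneg fun d _ => ?_
  split_ifs
  · refine Finset.prod_nonneg fun t _ => ?_
    split_ifs <;> linarith
  · exact le_rfl

/-- Maximum principle: a nonnegative supersolution `g` with `g ≥ 1` on the line `m' = -1`
dominates the probability of a hit before time `N`. -/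
lemma sum_pathWeight_le {I : ℝ} (h0 : 0 ≤ I) (h1 : I ≤ 1) (L : ℤ) (g : ℤ → ℤ → ℝ)
    (hg0 : ∀ m n, -1 ≤ m → n ≤ L → 0 ≤ g m n) (hg1 : ∀ n, n ≤ L → 1 ≤ g (-1) n)
    (hg : ∀ m n, 0 ≤ m → n < L → I * g (m - 1) n + (1 - I) * g (m + 1) (n + 1) ≤ g m n)
    (N : ℕ) (m n : ℤ) (hm : -1 ≤ m) (hn : n ≤ L) :
    ∑ T ∈ Finset.range N, pathWeight I L T m n ≤ g m n := by
  induction N generalizing m n with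
  | zero => simpa using hg0 m n hm hn
  | succ N ih =>
    rw [Finset.sum_range_succ', pathWeight_zero]
    by_cases hm1 : m = -1
    · subst hm1
      simpa [pathWeight_succ_of_mem] using hg1 n hn
    by_cases hnL : n = L
    · simpa [pathWeight_succ_of_mem, hnL, hm1] using hg0 m L hm le_rfl
    rw [if_neg hm1, add_zero,
      Finset.sum_congr rfl fun T _ => pathWeight_succ I L T m n hm1 hnL,
      Finset.sum_add_distrib, ← Finset.mul_sum, ← Finset.mul_sum]
    refine le_trans (add_le_add ?_ ?_) (hg m n (by omega) (by omega))
    · exact mul_le_mul_of_nonneg_left (ih (m - 1) n (by omega) hn) h0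
    · exact mul_le_mul_of_nonneg_left (ih (m + 1) (n + 1) (by omega) (by omega)) (by linarith)

lemma P_le {I : ℝ} (h0 : 0 ≤ I) (h1 : I ≤ 1) (L : ℤ) (g : ℤ → ℤ → ℝ)
    (hg0 : ∀ m n, -1 ≤ m → n ≤ L → 0 ≤ g m n) (hg1 : ∀ n, n ≤ L → 1 ≤ g (-1) n)
    (hg : ∀ m n, 0 ≤ m → n < L → I * g (m - 1) n + (1 - I) * g (m + 1) (n + 1) ≤ g m n)
    (m n : ℤ) (hm : -1 ≤ m) (hn : n ≤ L) : P I L m n ≤ g m n := by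
  rw [P_eq_tsum_pathWeight]
  exact Real.tsum_le_of_sum_range_le (fun T => pathWeight_nonneg h0 h1 L T m n)
    fun N => sum_pathWeight_le h0 h1 L g hg0 hg1 hg N m n hm hn

-- STATEMENT 14 (51% attack resistance): for every real `I` with `0 < I < 1`, every integer
-- `m ≥ 0`, and every integer `n` with `0 < n < L`, the success probability satisfies
-- `P_L(m, n) < 1`; moreover, if `0 ≤ I < 1/2` then `P_L(m, n) ≤ (I/(1-I))^(m+1)`.
-- In particular, even when `I > 1/2` the probability of a successful double-spending attack
-- on a finitely-long blockchain is strictly less than one.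
theorem stmt14 (I : ℝ) (L : ℤ) (hL : 0 < L) (m : ℤ) (hm : 0 ≤ m)
    (n : ℤ) (hn : 0 < n) (hnL : n < L) :
    (0 < I → I < 1 → P I L m n < 1) ∧
      (0 ≤ I → I < 1 / 2 → P I L m n ≤ (I / (1 - I)) ^ (m + 1).toNat) := by
  constructor
  · intro h0 h1
    have key := P_le h0.le h1.le L
      (fun m n => if m = -1 then 1 else 1 - (1 - I) ^ (L - n).toNat) ?_ ?_ ?_ m n (by omega) hnL.le
    · rw [if_neg (by omega)] at key
      have : 0 < (1 - I) ^ (L - n).toNat := pow_pos (by linarith) _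
      linarith
    · intro m n _ _
      have : (1 - I) ^ (L - n).toNat ≤ 1 := pow_le_one₀ (by linarith) (by linarith)
      split_ifs <;> linarith
    · intro n _
      simp
    · intro m n hm hn
      obtain ⟨k, hk⟩ : ∃ k : ℕ, L - n = k + 1 := ⟨(L - n - 1).toNat, by omega⟩
      have e1 : (L - n).toNat = k + 1 := by omega
      have e2 : (L - (n + 1)).toNat = k := by omega
      have hp : 0 ≤ (1 - I) ^ (k + 1) := pow_nonneg (by linarith) _
      have hs : (1 - I) ^ (k + 1) = (1 - I) * (1 - I) ^ k := pow_succ' _ _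
      have hI : 0 ≤ I * (1 - I) ^ (k + 1) := mul_nonneg h0.le hp
      rw [e1, e2, if_neg (show m + 1 ≠ -1 by omega), if_neg (show m ≠ -1 by omega)]
      -- Equality holds at `m = 0`, where the step to the left lands on the absorbing line.
      split_ifs <;> linarith
  · intro h0 h1
    have hr : 0 ≤ I / (1 - I) := div_nonneg h0 (by linarith)
    refine P_le h0 (by linarith) L (fun m _ => (I / (1 - I)) ^ (m + 1).toNat) ?_ ?_ ?_ m n
      (by omega) hnL.le
    · intro m n _ _
      exact pow_nonneg hr _
    · intro n _
      simp
    · intro m n hm hn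
      obtain ⟨k, rfl⟩ := Int.eq_ofNat_of_zero_le hm
      have e1 : ((k : ℤ) - 1 + 1).toNat = k := by omega
      have e2 : ((k : ℤ) + 1 + 1).toNat = k + 2 := by omega
      have e3 : ((k : ℤ) + 1).toNat = k + 1 := by omega
      rw [e1, e2, e3]
      have h2 : (1 - I) * (I / (1 - I)) = I := mul_div_cancel₀ I (by linarith)
      generalize I / (1 - I) = r at *
      -- The step identity reduces to `I + (1 - I) * r ^ 2 = r`, where `(1 - I) * r = I`.
      apply le_of_eq
      linear_combination (r ^ (k + 1) - r ^ k) * h2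
end

section
/- For every real I with 0 ≤ I ≤ 1, the series Σ_{i=0}^∞ C_i (1−I)^i I^{i+1} converges, and its sum equals I/(1−I) if 0 ≤ I < 1/2 and equals 1 if 1/2 ≤ I ≤ 1. -/
/-!
Put `x = I (1 - I)`, so the series is `I` times the Catalan generating function at `x`.
The Segner recurrence says that the partial sums satisfy `S (n + 1) ≤ 1 + x * S n ^ 2`, hence they
stay below every nonnegative fixed point of `r ↦ 1 + x * r ^ 2`; in particular the series converges.
By the Cauchy product the sum `c` is itself a fixed point, and
`1 - c + x * c ^ 2 = (1 - I * c) * (1 - (1 - I) * c)`. So `c` is the smaller of the two fixed points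
`1 / I` and `1 / (1 - I)`. Arguing with bounds on partial sums covers the boundary case `x = 1 / 4`
without any appeal to Abel's theorem.
-/

/-- The Segner recurrence weighted by powers of `x`, with the convolution indexed by a range. -/
lemma catalan_succ_mul_pow (x : ℝ) (n : ℕ) :
    (catalan (n + 1) : ℝ) * x ^ (n + 1) =
      x * ∑ k ∈ Finset.range (n + 1),
        ((catalan k : ℝ) * x ^ k) * ((catalan (n - k) : ℝ) * x ^ (n - k)) := by
  rw [catalan_succ, Finset.sum_fin_eq_sum_range, Nat.cast_sum, Finset.sum_mul, Finset.mul_sum]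
  refine Finset.sum_congr rfl fun k hk => ?_
  have hk' : k < n + 1 := Finset.mem_range.mp hk
  rw [dif_pos hk']
  have h : x ^ (n + 1) = x * (x ^ k * x ^ (n - k)) := by
    rw [← pow_add, Nat.add_sub_cancel' (by omega), pow_succ']
  rw [h]
  push_cast
  ring

/-- Partial sums of the Catalan series lie below every `r ≥ 0` with `1 + x * r ^ 2 ≤ r`:
the triangle of index pairs produced by the recurrence sits inside a square. -/
lemma sum_catalan_mul_pow_le {x r : ℝ} (hx : 0 ≤ x) (hr : 0 ≤ r) (h : 1 + x * r ^ 2 ≤ r) (n : ℕ) :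
    ∑ i ∈ Finset.range n, (catalan i : ℝ) * x ^ i ≤ r := by
  have hf : ∀ i, 0 ≤ (catalan i : ℝ) * x ^ i := fun i => by positivity
  induction n with
  | zero => simpa using hr
  | succ n ih =>
    rw [Finset.sum_range_succ', Finset.sum_congr rfl fun k _ => catalan_succ_mul_pow x k,
      ← Finset.mul_sum, Finset.sum_range_diag_flip n
        fun i j => ((catalan i : ℝ) * x ^ i) * ((catalan j : ℝ) * x ^ j)]
    have hsq : ∑ m ∈ Finset.range n, ∑ k ∈ Finset.range (n - m),
        ((catalan m : ℝ) * x ^ m) * ((catalan k : ℝ) * x ^ k) ≤ r ^ 2 := by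
      calc _ ≤ ∑ m ∈ Finset.range n, ((catalan m : ℝ) * x ^ m) * r := by
            refine Finset.sum_le_sum fun m _ => ?_
            rw [← Finset.mul_sum]
            refine mul_le_mul_of_nonneg_left (le_trans ?_ ih) (hf m)
            exact Finset.sum_le_sum_of_subset_of_nonneg
              (Finset.range_mono (Nat.sub_le n m)) fun i _ _ => hf i
        _ ≤ r ^ 2 := by
            rw [← Finset.sum_mul, pow_two]
            exact mul_le_mul_of_nonneg_right ih hr
    have := mul_le_mul_of_nonneg_left hsq hx
    simp only [catalan_zero, Nat.cast_one, pow_zero, mul_one]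
    linarith

/-- The Catalan generating function at `a * (1 - a)`, on the branch `1 / 2 ≤ a`. -/
lemma hasSum_catalan_mul_pow {a : ℝ} (ha : 1 / 2 ≤ a) (ha1 : a ≤ 1) :
    HasSum (fun i : ℕ => (catalan i : ℝ) * (a * (1 - a)) ^ i) (1 / a) := by
  have ha0 : 0 < a := by linarith
  set x := a * (1 - a) with hxdef
  have hx : 0 ≤ x := mul_nonneg ha0.le (by linarith)
  have hf : ∀ i, 0 ≤ (catalan i : ℝ) * x ^ i := fun i => by positivity
  have hfix : 1 + x * (1 / a) ^ 2 ≤ 1 / a := by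
    apply le_of_eq
    rw [hxdef]
    field_simp
    ring
  have hle := sum_catalan_mul_pow_le hx (by positivity) hfix
  have hs : Summable fun i : ℕ => (catalan i : ℝ) * x ^ i :=
    summable_of_sum_range_le hf hle
  have hc := Real.tsum_le_of_sum_range_le hf hle
  have hn : Summable fun i : ℕ => ‖(catalan i : ℝ) * x ^ i‖ := hs.norm
  have heq := hs.tsum_eq_zero_add
  simp only [catalan_succ_mul_pow] at heq
  rw [tsum_mul_left, ← tsum_mul_tsum_eq_tsum_sum_range_of_summable_norm hn hn] at heq
  simp only [catalan_zero, Nat.cast_one, pow_zero, mul_one] at heq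
  set c := ∑' i : ℕ, (catalan i : ℝ) * x ^ i with hcdef
  have hca : c * a ≤ 1 := (le_div_iff₀ ha0).mp hc
  have hprod : (1 - a * c) * (1 - (1 - a) * c) = 0 := by
    rw [hxdef] at heq
    linear_combination -heq
  have hval : c = 1 / a := by
    rw [eq_div_iff ha0.ne']
    rcases mul_eq_zero.mp hprod with h | h
    · linarith
    · -- The larger fixed point is compatible with `c ≤ 1 / a` only when both coincide.
      have hc0 : 0 ≤ c := tsum_nonneg hf
      nlinarith [mul_nonneg hc0 (by linarith : 0 ≤ 2 * a - 1)]
  rw [← hval]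
  exact hs.hasSum

-- STATEMENT 16: for every real `I` with `0 ≤ I ≤ 1`, the series
-- `Σ_{i=0}^∞ C_i (1-I)^i I^(i+1)` converges, and its sum equals `I/(1-I)` if `0 ≤ I < 1/2`
-- and equals `1` if `1/2 ≤ I ≤ 1`.  (`catalan i` is the `i`-th Catalan number.)
theorem stmt16 (I : ℝ) (hI0 : 0 ≤ I) (hI1 : I ≤ 1) :
    (I < 1 / 2 →
        HasSum (fun i : ℕ => (catalan i : ℝ) * (1 - I) ^ i * I ^ (i + 1)) (I / (1 - I))) ∧
      (1 / 2 ≤ I →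
        HasSum (fun i : ℕ => (catalan i : ℝ) * (1 - I) ^ i * I ^ (i + 1)) 1) := by
  constructor
  · intro h
    have hs := (hasSum_catalan_mul_pow (a := 1 - I) (by linarith) (by linarith)).mul_left I
    rw [mul_one_div] at hs
    refine hs.congr_fun fun i => ?_
    rw [sub_sub_cancel, mul_pow, pow_succ]
    ring
  · intro h
    have hs := (hasSum_catalan_mul_pow h hI1).mul_left I
    rw [mul_one_div_cancel (by linarith)] at hs
    refine hs.congr_fun fun i => ?_
    rw [mul_pow, pow_succ]
    ring
end
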